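/- arXiv:0908.1016 — 2 statements merged into one kernel-verified Lean document; each statement's English description precedes it below -/
import Mathlib

section
/- Let g be a nondegenerate symmetric bilinear form on ℝ⁴ and let G = G_g be the induced area metric. Then the Fresnel polynomial of G factorizes as a perfect square of the inverse-metric quadratic form: there exists a nonzero real constant c such that for every covector k ∈ (ℝ⁴)*, 𝒢(k,k,k,k) = c · (g^{ab} k_a k_b)². -/
noncomputable section

/-- First members of the ordered Petrov index pairs `[01],[02],[03],[12],[31],[23]`. -/
def pFst : Fin 6 → Fin 4 := ![0, 0, 0, 1, 3, 2]

/-- Second members of the ordered Petrov index pairs `[01],[02],[03],[12],[31],[23]`. -/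
def pSnd : Fin 6 → Fin 4 := ![1, 2, 3, 2, 1, 3]

/-- The Petrov matrix of a rank-4 covariant tensor on `ℝ⁴`: the symmetric `6 × 6` matrix
of components `G_{abcd}` indexed by the ordered pairs `[01],[02],[03],[12],[31],[23]`. -/
def petrov (G : Fin 4 → Fin 4 → Fin 4 → Fin 4 → ℝ) : Matrix (Fin 6) (Fin 6) ℝ :=
  Matrix.of fun A B => G (pFst A) (pSnd A) (pFst B) (pSnd B)

/-- The totally antisymmetric Levi-Civita symbol on four indices with `ε₀₁₂₃ = 1`. -/
def eps (a b c d : Fin 4) : ℝ :=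
  (Matrix.of fun i j => if (![a, b, c, d] : Fin 4 → Fin 4) i = j then (1 : ℝ) else 0).det

/-- The Petrov index associated to a pair of distinct indices (arbitrary on the diagonal). -/
def bIdx : Fin 4 → Fin 4 → Fin 6 :=
  ![![0, 0, 1, 2], ![0, 0, 3, 4], ![1, 3, 0, 5], ![2, 4, 5, 0]]

/-- The sign relating the tensor component `T_{ab}` to the Petrov component at `bIdx a b`
(`0` on the diagonal); the pair `[31]` is stored in the order `(3,1)`. -/
def bSgn : Fin 4 → Fin 4 → ℝ :=
  ![![0, 1, 1, 1], ![-1, 0, 1, -1], ![-1, -1, 0, 1], ![-1, 1, -1, 0]]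

/-- The rank-4 tensor with the area metric symmetries reconstructed from a
(symmetric) Petrov matrix. -/
def fromPetrov (M : Matrix (Fin 6) (Fin 6) ℝ) : Fin 4 → Fin 4 → Fin 4 → Fin 4 → ℝ :=
  fun a b c d => bSgn a b * bSgn c d * M (bIdx a b) (bIdx c d)

/-- The components `(G⁻¹)^{abcd}` of the inverse area metric, characterized by
`Petrov(G⁻¹) = Petrov(G)⁻¹`. -/
def ginv (G : Fin 4 → Fin 4 → Fin 4 → Fin 4 → ℝ) : Fin 4 → Fin 4 → Fin 4 → Fin 4 → ℝ :=
  fromPetrov (petrov G)⁻¹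

/-- The area metric volume form `(ω_G)_{abcd} = |det Petrov(G)|^{1/6} ε_{abcd}`. -/
def vol (G : Fin 4 → Fin 4 → Fin 4 → Fin 4 → ℝ) (a b c d : Fin 4) : ℝ :=
  |(petrov G).det| ^ ((1 : ℝ) / 6) * eps a b c d

/-- The inverse volume form `(ω_G⁻¹)^{abcd} = |det Petrov(G)|^{-1/6} ε^{abcd}`. -/
def volInv (G : Fin 4 → Fin 4 → Fin 4 → Fin 4 → ℝ) (a b c d : Fin 4) : ℝ :=
  |(petrov G).det| ^ (-(1 : ℝ) / 6) * eps a b c d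

/-- The Fresnel polynomial
`𝒢(k,k,k,k) = -(1/24)(ω_G)_{mnpq}(ω_G)_{rstu}(G⁻¹)^{mnra}(G⁻¹)^{bpsc}(G⁻¹)^{dqtu} k_a k_b k_c k_d`
(all repeated indices summed over `0,…,3`; the symmetrization over `a,b,c,d` in the Fresnel
tensor is immaterial after contraction with `k_a k_b k_c k_d`). -/
def fresnelPoly (G : Fin 4 → Fin 4 → Fin 4 → Fin 4 → ℝ) (k : Fin 4 → ℝ) : ℝ :=
  -(1 / 24) * ∑ m : Fin 4, ∑ n : Fin 4, ∑ p : Fin 4, ∑ q : Fin 4, ∑ r : Fin 4, ∑ s : Fin 4,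
      ∑ t : Fin 4, ∑ u : Fin 4, ∑ a : Fin 4, ∑ b : Fin 4, ∑ c : Fin 4, ∑ d : Fin 4,
    vol G m n p q * vol G r s t u * ginv G m n r a * ginv G b p s c * ginv G d q t u *
      k a * k b * k c * k d

/-- Integer form of the Levi-Civita symbol. -/
def epsZ (a b c d : Fin 4) : ℤ :=
  (Matrix.of fun i j => if (![a, b, c, d] : Fin 4 → Fin 4) i = j then (1 : ℤ) else 0).det

theorem eps_eq (a b c d : Fin 4) : eps a b c d = (epsZ a b c d : ℝ) := by
  unfold eps epsZ
  rw [Int.cast_det]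
  congr 1
  ext i j
  simp

/-- Closed form: a Vandermonde product divided by 12. -/
theorem epsZ_eq : ∀ a b c d : Fin 4, epsZ a b c d =
    (((b : ℕ) : ℤ) - (a : ℕ)) * ((c : ℕ) - (a : ℕ)) * ((d : ℕ) - (a : ℕ)) * ((c : ℕ) - (b : ℕ))
      * ((d : ℕ) - (b : ℕ)) * ((d : ℕ) - (c : ℕ)) / 12 := by
  intro a b c d
  simp only [epsZ, Matrix.det_succ_row_zero, Fin.sum_univ_succ, Matrix.of_apply,
    Matrix.submatrix_apply, Matrix.det_fin_zero]
  revert a b c d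
  decide +kernel

/-- Contraction with the Levi-Civita symbol. -/
def contr (f : Fin 4 → Fin 4 → Fin 4 → Fin 4 → ℝ) : ℝ :=
  ∑ m : Fin 4, ∑ n : Fin 4, ∑ p : Fin 4, ∑ q : Fin 4, eps m n p q * f m n p q

theorem contr_eq (f : Fin 4 → Fin 4 → Fin 4 → Fin 4 → ℝ) : contr f =
      f 0 1 2 3 - f 0 1 3 2 - f 0 2 1 3 + f 0 2 3 1 + f 0 3 1 2 - f 0 3 2 1
      - f 1 0 2 3 + f 1 0 3 2 + f 1 2 0 3 - f 1 2 3 0 - f 1 3 0 2 + f 1 3 2 0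
      + f 2 0 1 3 - f 2 0 3 1 - f 2 1 0 3 + f 2 1 3 0 + f 2 3 0 1 - f 2 3 1 0
      - f 3 0 1 2 + f 3 0 2 1 + f 3 1 0 2 - f 3 1 2 0 - f 3 2 0 1 + f 3 2 1 0 := by
  simp [contr, eps_eq, epsZ_eq, Fin.sum_univ_four]
  ring

theorem contr_det (x y z w : Fin 4 → ℝ) :
    contr (fun m n p q => x m * y n * z p * w q) = (Matrix.of ![x, y, z, w]).det := by
  rw [contr_eq]
  simp [Matrix.det_succ_row_zero, Fin.sum_univ_succ, Fin.succAbove]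
  ring

theorem contr_first (x z w K : Fin 4 → ℝ) (α Q : ℝ) :
    contr (fun m n p q => (x m * K n - x n * K m) * (α * K p - Q * z p) * w q)
      = -2 * Q * (Matrix.of ![x, K, z, w]).det := by
  rw [← contr_det]
  simp only [contr_eq]
  ring

/-- The metric-induced area metric. -/
def ind (g : Matrix (Fin 4) (Fin 4) ℝ) : Fin 4 → Fin 4 → Fin 4 → Fin 4 → ℝ :=
  fun a b c' d => g a c' * g b d - g a d * g b c'

theorem petrov_mul (A B : Matrix (Fin 4) (Fin 4) ℝ) :
    petrov (ind A) * petrov (ind B) = petrov (ind (A * B)) := by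
  ext i j
  simp only [Matrix.mul_apply, petrov, ind, Matrix.of_apply, Fin.sum_univ_succ, pFst, pSnd]
  simp
  generalize (![0, 0, 0, 1, 3, 2] : Fin 6 → Fin 4) i = a
  generalize (![1, 2, 3, 2, 1, 3] : Fin 6 → Fin 4) i = b
  generalize (![0, 0, 0, 1, 3, 2] : Fin 6 → Fin 4) j = c
  generalize (![1, 2, 3, 2, 1, 3] : Fin 6 → Fin 4) j = d
  ring

theorem petrov_one : petrov (ind 1) = 1 := by
  ext i j
  fin_cases i <;> fin_cases j <;> simp [petrov, ind, pFst, pSnd, Matrix.one_apply]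

theorem fromPetrov_petrov (h : Matrix (Fin 4) (Fin 4) ℝ) :
    fromPetrov (petrov (ind h)) = ind h := by
  have key : ∀ a b : Fin 4, ∀ x y : Fin 4 → ℝ,
      bSgn a b * (x (pFst (bIdx a b)) * y (pSnd (bIdx a b))
        - y (pFst (bIdx a b)) * x (pSnd (bIdx a b))) = x a * y b - y a * x b := by
    intro a b x y
    fin_cases a <;> fin_cases b <;> simp [bSgn, bIdx, pFst, pSnd] <;> ring
  funext a b c d
  have h1 := key a b (fun i => h i (pFst (bIdx c d))) (fun i => h i (pSnd (bIdx c d)))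
  have h2 := key c d (fun i => h a i) (fun i => h b i)
  simp only [fromPetrov, petrov, ind, Matrix.of_apply]
  linear_combination bSgn c d * h1 + h2

theorem contr_second (h : Matrix (Fin 4) (Fin 4) ℝ) (hs : h.IsSymm) (k K : Fin 4 → ℝ)
    (hK : ∀ i, K i = ∑ j, h i j * k j) :
    contr (fun r s t u => K t * (Matrix.of ![h r, K, h s, h u]).det)
      = -6 * h.det * ∑ t, K t * k t := by
  have hD : ∀ r s u, (Matrix.of ![h r, K, h s, h u]).det
      = (Matrix.of ![Pi.single r 1, k, Pi.single s 1, Pi.single u 1]).det * h.det := by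
    intro r s u
    rw [← Matrix.det_mul]
    congr 1
    ext i j
    fin_cases i <;> simp [Matrix.mul_apply, Pi.single_apply, hK]
    refine Finset.sum_congr rfl fun x _ => ?_
    rw [← hs.apply j x, mul_comm]
  simp only [hD, ← contr_det]
  simp only [contr_eq]
  simp [Fin.sum_univ_four]
  ring

theorem fresnel_contr (h : Matrix (Fin 4) (Fin 4) ℝ) (hs : h.IsSymm) (k K : Fin 4 → ℝ) (Q : ℝ)
    (hK : ∀ i, K i = ∑ j, h i j * k j) (hQ : Q = ∑ t, K t * k t) :
    contr (fun r s t u => contr (fun m n p q => ∑ a, ∑ b, ∑ c, ∑ d,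
      ind h m n r a * ind h b p s c * ind h d q t u * k a * k b * k c * k d))
      = 24 * h.det * Q ^ 2 := by
  have hc : ∀ r s t u m n p q, (∑ a, ∑ b, ∑ c, ∑ d,
      ind h m n r a * ind h b p s c * ind h d q t u * k a * k b * k c * k d)
      = (h m r * K n - h n r * K m) * (K s * K p - Q * h p s) * (K t * h q u - K u * h q t) := by
    intro r s t u m n p q
    have e1 : h m r * K n - h n r * K m = ∑ a, ind h m n r a * k a := by
      simp only [hK, ind, Finset.mul_sum, ← Finset.sum_sub_distrib]
      exact Finset.sum_congr rfl fun x _ => by ring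
    have e2 : K s * K p - Q * h p s = ∑ b, ∑ c, ind h b p s c * k b * k c := by
      have : K s = ∑ b, h b s * k b := by
        rw [hK]; exact Finset.sum_congr rfl fun x _ => by rw [hs.apply]
      rw [this, hQ, hK p]
      simp only [hK, ind, Fin.sum_univ_four]
      ring
    have e3 : K t * h q u - K u * h q t = ∑ d, ind h d q t u * k d := by
      simp only [hK, ind, Finset.sum_mul, ← Finset.sum_sub_distrib]
      exact Finset.sum_congr rfl fun x _ => by rw [← hs.apply x t, ← hs.apply x u]; ring
    rw [e1, e2, e3]
    simp only [Finset.sum_mul, Finset.mul_sum]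
    simp only [Fin.sum_univ_four]
    ring
  have hf : ∀ r s t u, contr (fun m n p q => (h m r * K n - h n r * K m)
      * (K s * K p - Q * h p s) * (K t * h q u - K u * h q t))
      = -2 * Q * (K t * (Matrix.of ![h r, K, h s, h u]).det
        - K u * (Matrix.of ![h r, K, h s, h t]).det) := by
    intro r s t u
    have h1 := contr_first (h r) (h s) (h u) K (K s) Q
    have h2 := contr_first (h r) (h s) (h t) K (K s) Q
    have e : ∀ x y, h x y = h y x := fun x y => hs.apply y x
    rw [show (fun m n p q => (h m r * K n - h n r * K m)
      * (K s * K p - Q * h p s) * (K t * h q u - K u * h q t)) = (fun m n p q =>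
      K t * ((h r m * K n - h r n * K m) * (K s * K p - Q * h s p) * h u q)
      - K u * ((h r m * K n - h r n * K m) * (K s * K p - Q * h s p) * h t q)) by
        funext m n p q
        rw [e m r, e n r, e p s, e q u, e q t]; ring]
    simp only [contr_eq] at h1 h2 ⊢
    linear_combination K t * h1 - K u * h2
  simp only [hc, hf]
  have h2 := contr_second h hs k K hK
  rw [← hQ] at h2
  simp only [contr_eq] at h2 ⊢
  linear_combination (-4 * Q) * h2

/-- For a nondegenerate symmetric bilinear form `g` on `ℝ⁴` and the induced
area metric `G_g`, the Fresnel polynomial is a perfect square of the inverse-metric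
quadratic form: there is a nonzero constant `c` with
`𝒢(k,k,k,k) = c (g^{ab}k_a k_b)²` for all covectors `k`. -/
theorem fresnel_of_metric_induced_area_metric
    (g : Matrix (Fin 4) (Fin 4) ℝ) (hsym : g.IsSymm) (hg : IsUnit g.det) :
    ∃ c : ℝ, c ≠ 0 ∧ ∀ k : Fin 4 → ℝ,
      fresnelPoly (fun a b c' d => g a c' * g b d - g a d * g b c') k
        = c * (∑ a : Fin 4, ∑ b : Fin 4, g⁻¹ a b * k a * k b) ^ 2 := by
  have hdet : g * g⁻¹ = 1 := Matrix.mul_nonsing_inv g hg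
  have hsi : (g⁻¹).IsSymm := by
    unfold Matrix.IsSymm
    rw [Matrix.transpose_nonsing_inv, hsym.eq]
  have hP : petrov (ind g) * petrov (ind g⁻¹) = 1 := by
    rw [petrov_mul, hdet, petrov_one]
  have hinv : ginv (ind g) = ind g⁻¹ := by
    rw [ginv, Matrix.inv_eq_right_inv hP, fromPetrov_petrov]
  have hPd : (petrov (ind g)).det ≠ 0 := by
    intro h0
    have := congrArg Matrix.det hP
    simp [h0] at this
  have hid : (g⁻¹).det ≠ 0 := by
    intro h0
    have := congrArg Matrix.det hdet
    rw [Matrix.det_mul, h0] at this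
    simp at this
  have hv : |(petrov (ind g)).det| ^ ((1 : ℝ) / 6) ≠ 0 :=
    (Real.rpow_pos_of_pos (abs_pos.mpr hPd) _).ne'
  refine ⟨-((|(petrov (ind g)).det| ^ ((1 : ℝ) / 6)) ^ 2 * (g⁻¹).det),
    neg_ne_zero.mpr (mul_ne_zero (pow_ne_zero 2 hv) hid), fun k => ?_⟩
  change fresnelPoly (ind g) k = _
  have hfc := fresnel_contr g⁻¹ hsi k (fun i => ∑ j, g⁻¹ i j * k j) _ (fun _ => rfl) rfl
  have hQ : ∑ t, (∑ j, g⁻¹ t j * k j) * k t = ∑ a, ∑ b, g⁻¹ a b * k a * k b := by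
    simp only [Finset.sum_mul]
    exact Finset.sum_congr rfl fun x _ => Finset.sum_congr rfl fun y _ => by ring
  rw [hQ] at hfc
  rw [fresnelPoly, hinv]
  generalize (∑ a, ∑ b, g⁻¹ a b * k a * k b) = Q at hfc
  have hvol : ∀ a b c d, vol (ind g) a b c d
      = |(petrov (ind g)).det| ^ ((1 : ℝ) / 6) * eps a b c d := fun _ _ _ _ => rfl
  generalize |(petrov (ind g)).det| ^ ((1 : ℝ) / 6) = v at *
  have hcomm : ∀ F : Fin 4 → Fin 4 → Fin 4 → Fin 4 → Fin 4 → Fin 4 → Fin 4 → Fin 4 → ℝ,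
      contr (fun r s t u => contr (fun m n p q => F m n p q r s t u))
      = contr (fun m n p q => contr (fun r s t u => F m n p q r s t u)) := by
    intro F
    simp only [contr_eq]
    ring
  rw [hcomm] at hfc
  have hs : (∑ m : Fin 4, ∑ n : Fin 4, ∑ p : Fin 4, ∑ q : Fin 4, ∑ r : Fin 4, ∑ s : Fin 4,
      ∑ t : Fin 4, ∑ u : Fin 4, ∑ a : Fin 4, ∑ b : Fin 4, ∑ c : Fin 4, ∑ d : Fin 4,
      vol (ind g) m n p q * vol (ind g) r s t u * ind g⁻¹ m n r a * ind g⁻¹ b p s c * ind g⁻¹ d q t u *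
      k a * k b * k c * k d) = v ^ 2 * (24 * (g⁻¹).det * Q ^ 2) := by
    rw [← hfc]
    unfold contr
    iterate 4
      rw [Finset.mul_sum]
      refine Finset.sum_congr rfl fun _ _ => ?_
    rw [← mul_assoc]
    iterate 4
      rw [Finset.mul_sum]
      refine Finset.sum_congr rfl fun _ _ => ?_
    rw [← mul_assoc]
    iterate 4
      rw [Finset.mul_sum]
      refine Finset.sum_congr rfl fun _ _ => ?_
    rw [hvol, hvol]
    ring
  rw [hs]
  ring

end
end

section
/- (Existence of a null plane, Lemma 4.1.) Let G be an area metric on ℝ⁴ and suppose the endomorphism K = ω̂_G ∘ Ĝ⁻¹ of Λ²((ℝ⁴)*) admits a real Jordan chain of length two: there exist λ ∈ ℝ and Ω₁, Ω₂ ∈ Λ²((ℝ⁴)*) with Ω₁ ≠ 0, KΩ₁ = λΩ₁ and KΩ₂ = Ω₁ + λΩ₂. Then there exist linearly independent covectors θ¹, θ² ∈ (ℝ⁴)* such that every ξ in the linear span of θ¹ and θ² satisfies 𝒢(ξ,ξ,ξ,ξ) = 0. -/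
noncomputable section

/-- The endomorphism `K = ω̂_G ∘ Ĝ⁻¹` of `Λ²((ℝ⁴)*)`, represented in Petrov coordinates
(an element `Ω ∈ Λ²((ℝ⁴)*)` is represented by its six components `Ω_{[ab]}` over the
ordered pairs `[01],[02],[03],[12],[31],[23]`). -/
def Kmat (G : Fin 4 → Fin 4 → Fin 4 → Fin 4 → ℝ) : Matrix (Fin 6) (Fin 6) ℝ :=
  petrov (vol G) * (petrov G)⁻¹

/-- real-valued Kronecker delta -/
def dl (a b : Fin 4) : ℝ := if a = b then 1 else 0

theorem eps_expand (a b c d : Fin 4) : eps a b c d =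
      dl a 0 * dl b 1 * dl c 2 * dl d 3
      - dl a 0 * dl b 1 * dl c 3 * dl d 2
      - dl a 0 * dl b 2 * dl c 1 * dl d 3
      + dl a 0 * dl b 2 * dl c 3 * dl d 1
      + dl a 0 * dl b 3 * dl c 1 * dl d 2
      - dl a 0 * dl b 3 * dl c 2 * dl d 1
      - dl a 1 * dl b 0 * dl c 2 * dl d 3
      + dl a 1 * dl b 0 * dl c 3 * dl d 2
      + dl a 1 * dl b 2 * dl c 0 * dl d 3
      - dl a 1 * dl b 2 * dl c 3 * dl d 0
      - dl a 1 * dl b 3 * dl c 0 * dl d 2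
      + dl a 1 * dl b 3 * dl c 2 * dl d 0
      + dl a 2 * dl b 0 * dl c 1 * dl d 3
      - dl a 2 * dl b 0 * dl c 3 * dl d 1
      - dl a 2 * dl b 1 * dl c 0 * dl d 3
      + dl a 2 * dl b 1 * dl c 3 * dl d 0
      + dl a 2 * dl b 3 * dl c 0 * dl d 1
      - dl a 2 * dl b 3 * dl c 1 * dl d 0
      - dl a 3 * dl b 0 * dl c 1 * dl d 2
      + dl a 3 * dl b 0 * dl c 2 * dl d 1
      + dl a 3 * dl b 1 * dl c 0 * dl d 2
      - dl a 3 * dl b 1 * dl c 2 * dl d 0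
      - dl a 3 * dl b 2 * dl c 0 * dl d 1
      + dl a 3 * dl b 2 * dl c 1 * dl d 0 := by
  unfold eps
  have : (Matrix.of fun i j => if (![a, b, c, d] : Fin 4 → Fin 4) i = j then (1 : ℝ) else 0)
      = !![dl a 0, dl a 1, dl a 2, dl a 3; dl b 0, dl b 1, dl b 2, dl b 3;
           dl c 0, dl c 1, dl c 2, dl c 3; dl d 0, dl d 1, dl d 2, dl d 3] := by
    ext i j
    fin_cases i <;> fin_cases j <;> rfl
  rw [this]
  simp [Matrix.det_succ_row_zero, Fin.sum_univ_succ, Fin.succAbove]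
  ring

theorem dl_sum (i : Fin 4) (f : Fin 4 → ℝ) : ∑ a, dl a i * f a = f i := by
  simp [dl]

set_option maxHeartbeats 4000000 in
theorem eps_sum (f : Fin 4 → Fin 4 → Fin 4 → Fin 4 → ℝ) :
    ∑ m : Fin 4, ∑ n : Fin 4, ∑ p : Fin 4, ∑ q : Fin 4, eps m n p q * f m n p q =
      (f 0 1 2 3 - f 1 0 2 3) - (f 0 1 3 2 - f 1 0 3 2)
      - (f 0 2 1 3 - f 2 0 1 3) + (f 0 2 3 1 - f 2 0 3 1)
      + (f 0 3 1 2 - f 3 0 1 2) - (f 0 3 2 1 - f 3 0 2 1)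
      + (f 1 2 0 3 - f 2 1 0 3) - (f 1 2 3 0 - f 2 1 3 0)
      - (f 1 3 0 2 - f 3 1 0 2) + (f 1 3 2 0 - f 3 1 2 0)
      + (f 2 3 0 1 - f 3 2 0 1) - (f 2 3 1 0 - f 3 2 1 0) := by
  simp only [eps_expand, add_mul, sub_mul, Finset.sum_add_distrib, Finset.sum_sub_distrib, mul_assoc, ← Finset.mul_sum, dl_sum]
  ring

/-- contraction of an area-type tensor with one covector in the last slot -/
def cA (h : Fin 4 → Fin 4 → Fin 4 → Fin 4 → ℝ) (k : Fin 4 → ℝ) (m n r : Fin 4) : ℝ :=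
  ∑ a, h m n r a * k a

def cB (h : Fin 4 → Fin 4 → Fin 4 → Fin 4 → ℝ) (k : Fin 4 → ℝ) (q t u : Fin 4) : ℝ :=
  ∑ d, h d q t u * k d

def cM (h : Fin 4 → Fin 4 → Fin 4 → Fin 4 → ℝ) (k : Fin 4 → ℝ) (p s : Fin 4) : ℝ :=
  ∑ b, ∑ c, h b p s c * k b * k c

set_option maxHeartbeats 4000000 in
theorem sum_split (e f : ℝ) (x : Fin 4 → ℝ) (y : Fin 4 → Fin 4 → ℝ) (z k : Fin 4 → ℝ) :
    ∑ a : Fin 4, ∑ b : Fin 4, ∑ c : Fin 4, ∑ d : Fin 4,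
      e * f * x a * y b c * z d * k a * k b * k c * k d =
    e * (f * ((∑ a, x a * k a) * (∑ b, ∑ c, y b c * k b * k c) * (∑ d, z d * k d))) := by
  simp only [Fin.sum_univ_four]
  ring

theorem sum4_mul (c : ℝ) (f : Fin 4 → Fin 4 → Fin 4 → Fin 4 → ℝ) :
    c * ∑ m : Fin 4, ∑ n : Fin 4, ∑ p : Fin 4, ∑ q : Fin 4, f m n p q =
      ∑ m : Fin 4, ∑ n : Fin 4, ∑ p : Fin 4, ∑ q : Fin 4, c * f m n p q := by
  simp only [Finset.mul_sum]

theorem fresnel_eq (G : Fin 4 → Fin 4 → Fin 4 → Fin 4 → ℝ) (k : Fin 4 → ℝ) :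
    fresnelPoly G k = -(1/24) * (|(petrov G).det| ^ ((1 : ℝ) / 6))^2 *
    ∑ m : Fin 4, ∑ n : Fin 4, ∑ p : Fin 4, ∑ q : Fin 4, eps m n p q *
     ∑ r : Fin 4, ∑ s : Fin 4, ∑ t : Fin 4, ∑ u : Fin 4, eps r s t u *
      (cA (ginv G) k m n r * cM (ginv G) k p s * cB (ginv G) k q t u) := by
  unfold fresnelPoly cA cM cB
  simp only [sum_split]
  unfold vol
  generalize |(petrov G).det| ^ ((1 : ℝ) / 6) = c
  rw [mul_assoc]
  congr 1
  rw [sum4_mul]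
  refine Finset.sum_congr rfl fun m _ => Finset.sum_congr rfl fun n _ => Finset.sum_congr rfl fun p _ => Finset.sum_congr rfl fun q _ => ?_
  rw [mul_left_comm]
  simp only [Finset.mul_sum]
  refine Finset.sum_congr rfl fun m _ => Finset.sum_congr rfl fun n _ => Finset.sum_congr rfl fun p _ => Finset.sum_congr rfl fun q _ => ?_
  ring

/-- the double epsilon contraction in the Fresnel polynomial -/
def fS (h : Fin 4 → Fin 4 → Fin 4 → Fin 4 → ℝ) (k : Fin 4 → ℝ) : ℝ :=
    ∑ m : Fin 4, ∑ n : Fin 4, ∑ p : Fin 4, ∑ q : Fin 4, eps m n p q *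
     ∑ r : Fin 4, ∑ s : Fin 4, ∑ t : Fin 4, ∑ u : Fin 4, eps r s t u *
      (cA h k m n r * cM h k p s * cB h k q t u)

def gS (h : Fin 4 → Fin 4 → Fin 4 → Fin 4 → ℝ) (k : Fin 4 → ℝ) (m n p q : Fin 4) : ℝ :=
  cA h k m n 2 * cM h k p 3 * cA h k 0 1 q - cA h k m n 3 * cM h k p 2 * cA h k 0 1 q
  - cA h k m n 1 * cM h k p 3 * cA h k 0 2 q + cA h k m n 3 * cM h k p 1 * cA h k 0 2 q
  + cA h k m n 1 * cM h k p 2 * cA h k 0 3 q - cA h k m n 2 * cM h k p 1 * cA h k 0 3 q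
  + cA h k m n 0 * cM h k p 3 * cA h k 1 2 q - cA h k m n 3 * cM h k p 0 * cA h k 1 2 q
  - cA h k m n 0 * cM h k p 2 * cA h k 1 3 q + cA h k m n 2 * cM h k p 0 * cA h k 1 3 q
  + cA h k m n 0 * cM h k p 1 * cA h k 2 3 q - cA h k m n 1 * cM h k p 0 * cA h k 2 3 q

theorem symm_vals (H : Matrix (Fin 6) (Fin 6) ℝ) (hH : ∀ i j, H i j = H j i) :
    H 1 0 = H 0 1 ∧ H 2 0 = H 0 2 ∧ H 3 0 = H 0 3 ∧ H 4 0 = H 0 4 ∧ H 5 0 = H 0 5 ∧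
    H 2 1 = H 1 2 ∧ H 3 1 = H 1 3 ∧ H 4 1 = H 1 4 ∧ H 5 1 = H 1 5 ∧
    H 3 2 = H 2 3 ∧ H 4 2 = H 2 4 ∧ H 5 2 = H 2 5 ∧
    H 4 3 = H 3 4 ∧ H 5 3 = H 3 5 ∧ H 5 4 = H 4 5 := by
  refine ⟨?_, ?_, ?_, ?_, ?_, ?_, ?_, ?_, ?_, ?_, ?_, ?_, ?_, ?_, ?_⟩ <;> exact hH _ _


theorem fromPetrov_swap (H : Matrix (Fin 6) (Fin 6) ℝ) (a b c d : Fin 4) :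
    fromPetrov H a b c d = - fromPetrov H b a c d := by
  have h1 : bSgn a b = - bSgn b a := by
    fin_cases a <;> fin_cases b <;> simp [bSgn]
  have h2 : bIdx a b = bIdx b a := by
    clear h1; revert a b; decide
  simp only [fromPetrov, h1, h2]
  ring

theorem fromPetrov_symm (H : Matrix (Fin 6) (Fin 6) ℝ) (hH : ∀ i j, H i j = H j i)
    (a b c d : Fin 4) : fromPetrov H a b c d = fromPetrov H c d a b := by
  simp only [fromPetrov, hH (bIdx a b)]
  ring

/-- `fS` written out, using the antisymmetry of the contracted tensor. -/
theorem fS_expand (h : Fin 4 → Fin 4 → Fin 4 → Fin 4 → ℝ)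
    (hs : ∀ a b c d, h a b c d = h c d a b) (ha : ∀ a b c d, h a b c d = - h b a c d)
    (k : Fin 4 → ℝ) :
    fS h k = -4 * (
      gS h k 0 1 2 3 - gS h k 0 1 3 2 - gS h k 0 2 1 3 + gS h k 0 2 3 1 + gS h k 0 3 1 2 - gS h k 0 3 2 1
      + gS h k 1 2 0 3 - gS h k 1 2 3 0 - gS h k 1 3 0 2 + gS h k 1 3 2 0 + gS h k 2 3 0 1 - gS h k 2 3 1 0) := by
  have hB : ∀ q t u, cB h k q t u = - cA h k t u q := by
    intro q t u
    simp only [cB, cA, ← Finset.sum_neg_distrib]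
    refine Finset.sum_congr rfl fun d _ => ?_
    rw [ha d q t u, hs q d t u]; ring
  have hA : ∀ m n r, cA h k m n r = - cA h k n m r := by
    intro m n r
    simp only [cA, ← Finset.sum_neg_distrib]
    refine Finset.sum_congr rfl fun d _ => ?_
    rw [ha m n r d]; ring
  have a1 := hA 1 0
  have a2 := hA 2 0
  have a3 := hA 3 0
  have a4 := hA 2 1
  have a5 := hA 3 1
  have a6 := hA 3 2
  unfold fS gS
  simp only [eps_sum, hB, a1, a2, a3, a4, a5, a6]
  ring

set_option maxHeartbeats 40000000 in
theorem key0 (H : Matrix (Fin 6) (Fin 6) ℝ) (hH : ∀ i j, H i j = H j i) (k : Fin 4 → ℝ) :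
    fS (fromPetrov H) k * k 0 ^ 2 = -24 *
      (cM (fromPetrov H) k 1 1 * (cM (fromPetrov H) k 2 2 * cM (fromPetrov H) k 3 3 - cM (fromPetrov H) k 2 3 * cM (fromPetrov H) k 3 2)
      - cM (fromPetrov H) k 1 2 * (cM (fromPetrov H) k 2 1 * cM (fromPetrov H) k 3 3 - cM (fromPetrov H) k 2 3 * cM (fromPetrov H) k 3 1)
      + cM (fromPetrov H) k 1 3 * (cM (fromPetrov H) k 2 1 * cM (fromPetrov H) k 3 2 - cM (fromPetrov H) k 2 2 * cM (fromPetrov H) k 3 1)) := by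
  obtain ⟨h1, h2, h3, h4, h5, h6, h7, h8, h9, h10, h11, h12, h13, h14, h15⟩ := symm_vals H hH
  rw [fS_expand _ (fromPetrov_symm H hH) (fromPetrov_swap H)]
  unfold gS
  simp only [cA, cM, Fin.sum_univ_four, fromPetrov, bSgn, bIdx, Matrix.cons_val, mul_zero, zero_mul, add_zero, zero_add, one_mul, mul_one, neg_mul, mul_neg, neg_neg, h1, h2, h3, h4, h5, h6, h7, h8, h9, h10, h11, h12, h13, h14, h15]
  clear h1 h2 h3 h4 h5 h6 h7 h8 h9 h10 h11 h12 h13 h14 h15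
  generalize H 0 0 = x00
  generalize H 0 1 = x01
  generalize H 0 2 = x02
  generalize H 0 3 = x03
  generalize H 0 4 = x04
  generalize H 0 5 = x05
  generalize H 1 1 = x11
  generalize H 1 2 = x12
  generalize H 1 3 = x13
  generalize H 1 4 = x14
  generalize H 1 5 = x15
  generalize H 2 2 = x22
  generalize H 2 3 = x23
  generalize H 2 4 = x24
  generalize H 2 5 = x25
  generalize H 3 3 = x33
  generalize H 3 4 = x34
  generalize H 3 5 = x35
  generalize H 4 4 = x44
  generalize H 4 5 = x45
  generalize H 5 5 = x55
  generalize k 0 = k0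
  generalize k 1 = k1
  generalize k 2 = k2
  generalize k 3 = k3
  ring

theorem eps_perm (σ : Equiv.Perm (Fin 4)) (a b c d : Fin 4) :
    eps (σ a) (σ b) (σ c) (σ d) = ((Equiv.Perm.sign σ : ℤ) : ℝ) * eps a b c d := by
  have h := Matrix.det_permute' σ⁻¹
    (Matrix.of fun i j => if (![a, b, c, d] : Fin 4 → Fin 4) i = j then (1 : ℝ) else 0)
  rw [Equiv.Perm.sign_inv] at h
  unfold eps
  rw [← h]
  congr 1
  ext i j
  have : (![σ a, σ b, σ c, σ d] : Fin 4 → Fin 4) i = σ (![a, b, c, d] i) := by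
    fin_cases i <;> rfl
  simp only [Matrix.of_apply, Matrix.submatrix_apply, this, id, Equiv.Perm.eq_inv_iff_eq]

theorem sum4_perm (σ : Equiv.Perm (Fin 4)) (f : Fin 4 → Fin 4 → Fin 4 → Fin 4 → ℝ) :
    ∑ m : Fin 4, ∑ n : Fin 4, ∑ p : Fin 4, ∑ q : Fin 4, f (σ m) (σ n) (σ p) (σ q) =
    ∑ m : Fin 4, ∑ n : Fin 4, ∑ p : Fin 4, ∑ q : Fin 4, f m n p q := by
  rw [← Equiv.sum_comp σ (fun m => ∑ n : Fin 4, ∑ p : Fin 4, ∑ q : Fin 4, f m n p q)]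
  refine Finset.sum_congr rfl fun m _ => ?_
  rw [← Equiv.sum_comp σ (fun n => ∑ p : Fin 4, ∑ q : Fin 4, f (σ m) n p q)]
  refine Finset.sum_congr rfl fun n _ => ?_
  rw [← Equiv.sum_comp σ (fun p => ∑ q : Fin 4, f (σ m) (σ n) p q)]
  refine Finset.sum_congr rfl fun p _ => ?_
  rw [← Equiv.sum_comp σ (fun q => f (σ m) (σ n) (σ p) q)]

theorem eps_sum_perm (σ : Equiv.Perm (Fin 4)) (f : Fin 4 → Fin 4 → Fin 4 → Fin 4 → ℝ) :
    ∑ m : Fin 4, ∑ n : Fin 4, ∑ p : Fin 4, ∑ q : Fin 4,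
      eps m n p q * f (σ m) (σ n) (σ p) (σ q) =
    ((Equiv.Perm.sign σ : ℤ) : ℝ) *
      ∑ m : Fin 4, ∑ n : Fin 4, ∑ p : Fin 4, ∑ q : Fin 4, eps m n p q * f m n p q := by
  rw [← sum4_perm σ (fun m n p q => eps m n p q * f m n p q), sum4_mul]
  have hs : ((Equiv.Perm.sign σ : ℤ) : ℝ) * ((Equiv.Perm.sign σ : ℤ) : ℝ) = 1 := by
    rcases Int.units_eq_one_or (Equiv.Perm.sign σ) with h | h <;> rw [h] <;> norm_num
  simp only [eps_perm, ← mul_assoc, hs, one_mul]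

theorem cM_perm (h : Fin 4 → Fin 4 → Fin 4 → Fin 4 → ℝ) (k : Fin 4 → ℝ)
    (σ : Equiv.Perm (Fin 4)) (p s : Fin 4) :
    cM (fun a b c d => h (σ a) (σ b) (σ c) (σ d)) (fun a => k (σ a)) p s
      = cM h k (σ p) (σ s) := by
  simp only [cM]
  rw [← Equiv.sum_comp σ (fun b => ∑ c, h b (σ p) (σ s) c * k b * k c)]
  refine Finset.sum_congr rfl fun m _ => ?_
  rw [← Equiv.sum_comp σ (fun c => h (σ m) (σ p) (σ s) c * k (σ m) * k c)]

theorem cA_perm (h : Fin 4 → Fin 4 → Fin 4 → Fin 4 → ℝ) (k : Fin 4 → ℝ)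
    (σ : Equiv.Perm (Fin 4)) (p s t : Fin 4) :
    cA (fun a b c d => h (σ a) (σ b) (σ c) (σ d)) (fun a => k (σ a)) p s t
      = cA h k (σ p) (σ s) (σ t) := by
  simp only [cA]
  rw [← Equiv.sum_comp σ (fun b => h (σ p) (σ s) (σ t) b * k b)]

theorem cB_perm (h : Fin 4 → Fin 4 → Fin 4 → Fin 4 → ℝ) (k : Fin 4 → ℝ)
    (σ : Equiv.Perm (Fin 4)) (p s t : Fin 4) :
    cB (fun a b c d => h (σ a) (σ b) (σ c) (σ d)) (fun a => k (σ a)) p s t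
      = cB h k (σ p) (σ s) (σ t) := by
  simp only [cB]
  rw [← Equiv.sum_comp σ (fun b => h b (σ p) (σ s) (σ t) * k b)]

theorem fS_perm (h : Fin 4 → Fin 4 → Fin 4 → Fin 4 → ℝ) (k : Fin 4 → ℝ)
    (σ : Equiv.Perm (Fin 4)) :
    fS (fun a b c d => h (σ a) (σ b) (σ c) (σ d)) (fun a => k (σ a)) = fS h k := by
  have hs : ((Equiv.Perm.sign σ : ℤ) : ℝ) * ((Equiv.Perm.sign σ : ℤ) : ℝ) = 1 := by
    rcases Int.units_eq_one_or (Equiv.Perm.sign σ) with h | h <;> rw [h] <;> norm_num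
  unfold fS
  simp only [cM_perm, cA_perm, cB_perm]
  rw [eps_sum_perm σ (fun m n p q => ∑ r : Fin 4, ∑ s : Fin 4, ∑ t : Fin 4, ∑ u : Fin 4,
    eps r s t u * (cA h k m n (σ r) * cM h k p (σ s) * cB h k q (σ t) (σ u)))]
  have : ∀ m n p q, (∑ r : Fin 4, ∑ s : Fin 4, ∑ t : Fin 4, ∑ u : Fin 4,
    eps r s t u * (cA h k m n (σ r) * cM h k p (σ s) * cB h k q (σ t) (σ u))) =
    ((Equiv.Perm.sign σ : ℤ) : ℝ) * (∑ r : Fin 4, ∑ s : Fin 4, ∑ t : Fin 4, ∑ u : Fin 4,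
    eps r s t u * (cA h k m n r * cM h k p s * cB h k q t u)) := fun m n p q =>
    eps_sum_perm σ (fun r s t u => cA h k m n r * cM h k p s * cB h k q t u)
  rw [sum4_mul]
  refine Finset.sum_congr rfl fun m _ => Finset.sum_congr rfl fun n _ =>
    Finset.sum_congr rfl fun p _ => Finset.sum_congr rfl fun q _ => ?_
  rw [this, mul_left_comm (eps m n p q), ← mul_assoc, hs, one_mul]

theorem fromPetrov_petrov_s10 (h : Fin 4 → Fin 4 → Fin 4 → Fin 4 → ℝ)
    (hs : ∀ a b c d, h a b c d = h c d a b) (ha : ∀ a b c d, h a b c d = - h b a c d) :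
    fromPetrov (petrov h) = h := by
  have key : ∀ a b c d, bSgn a b * h (pFst (bIdx a b)) (pSnd (bIdx a b)) c d = h a b c d := by
    intro a b c d
    have h0 : ∀ a, h a a c d = 0 := fun a => by linarith [ha a a c d]
    have h1 := fun a b => ha a b c d
    fin_cases a <;> fin_cases b <;> simp [bSgn, bIdx, pFst, pSnd, h0] <;>
      exact (h1 _ _).symm
  funext a b c d
  simp only [fromPetrov, petrov, Matrix.of_apply]
  rw [← key a b c d, hs _ _ c d, ← key c d, hs (pFst (bIdx c d))]
  ring

theorem key_perm (h : Fin 4 → Fin 4 → Fin 4 → Fin 4 → ℝ)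
    (hs : ∀ a b c d, h a b c d = h c d a b) (ha : ∀ a b c d, h a b c d = - h b a c d)
    (k : Fin 4 → ℝ) (σ : Equiv.Perm (Fin 4)) :
    fS h k * k (σ 0) ^ 2 = -24 *
      (cM h k (σ 1) (σ 1) * (cM h k (σ 2) (σ 2) * cM h k (σ 3) (σ 3) - cM h k (σ 2) (σ 3) * cM h k (σ 3) (σ 2))
      - cM h k (σ 1) (σ 2) * (cM h k (σ 2) (σ 1) * cM h k (σ 3) (σ 3) - cM h k (σ 2) (σ 3) * cM h k (σ 3) (σ 1))
      + cM h k (σ 1) (σ 3) * (cM h k (σ 2) (σ 1) * cM h k (σ 3) (σ 2) - cM h k (σ 2) (σ 2) * cM h k (σ 3) (σ 1))) := by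
  have e := fromPetrov_petrov_s10 (fun a b c d => h (σ a) (σ b) (σ c) (σ d))
    (fun a b c d => hs _ _ _ _) (fun a b c d => ha _ _ _ _)
  have := key0 (petrov (fun a b c d => h (σ a) (σ b) (σ c) (σ d)))
    (fun i j => by simp only [petrov, Matrix.of_apply]; exact hs _ _ _ _) (fun a => k (σ a))
  rw [e, fS_perm] at this
  simpa only [cM_perm] using this

/-- If the quadratic form attached to `ξ` degenerates along an independent `η`, then `fS = 0`. -/
theorem fS_zero (h : Fin 4 → Fin 4 → Fin 4 → Fin 4 → ℝ)
    (hs : ∀ a b c d, h a b c d = h c d a b) (ha : ∀ a b c d, h a b c d = - h b a c d)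
    (ξ η : Fin 4 → ℝ) (hind : ∃ a b, ξ a * η b - ξ b * η a ≠ 0)
    (hξ : ∀ p, ∑ s, cM h ξ p s * ξ s = 0) (hη : ∀ p, ∑ s, cM h ξ p s * η s = 0) :
    fS h ξ = 0 := by
  obtain ⟨a, b, hab⟩ := hind
  have : ∃ i, ξ i ≠ 0 := by
    by_contra! hc
    simp [hc] at hab
  obtain ⟨i, hi⟩ := this
  obtain ⟨σ, hσ⟩ : ∃ σ : Equiv.Perm (Fin 4), σ 0 = i := ⟨Equiv.swap 0 i, Equiv.swap_apply_left _ _⟩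
  have key := key_perm h hs ha ξ σ
  set v : Fin 4 → ℝ := fun j => ξ i * η j - η i * ξ j with hv
  have hv0 : v (σ 0) = 0 := by simp only [hv, hσ]; ring
  have hMv : ∀ p, cM h ξ p (σ 1) * v (σ 1) + cM h ξ p (σ 2) * v (σ 2)
      + cM h ξ p (σ 3) * v (σ 3) = 0 := by
    intro p
    have e : ∑ s, cM h ξ p s * v s = 0 := by
      have : ∑ s, cM h ξ p s * v s =
          ξ i * (∑ s, cM h ξ p s * η s) - η i * ∑ s, cM h ξ p s * ξ s := by
        simp only [Finset.mul_sum, ← Finset.sum_sub_distrib, hv]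
        refine Finset.sum_congr rfl fun s _ => ?_
        ring
      rw [this, hξ, hη]; ring
    rw [← Equiv.sum_comp σ, Fin.sum_univ_four, hv0] at e
    linarith
  have hvne : ∃ j, v (σ j) ≠ 0 := by
    by_contra! hc
    have hc' : ∀ j, v j = 0 := fun j => by simpa using hc (σ.symm j)
    have h1 := hc' a
    have h2 := hc' b
    simp only [hv] at h1 h2
    apply hab
    have : ξ i * (ξ a * η b - ξ b * η a) = 0 := by linear_combination ξ a * h2 - ξ b * h1
    exact (mul_eq_zero.mp this).resolve_left hi
  have e1 := hMv (σ 1)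
  have e2 := hMv (σ 2)
  have e3 := hMv (σ 3)
  rw [hσ] at key
  have hi2 : ξ i ^ 2 ≠ 0 := pow_ne_zero _ hi
  suffices hh : fS h ξ * ξ i ^ 2 = 0 from (mul_eq_zero.mp hh).resolve_right hi2
  rw [key]
  generalize cM h ξ (σ 1) (σ 1) = m11 at *
  generalize cM h ξ (σ 1) (σ 2) = m12 at *
  generalize cM h ξ (σ 1) (σ 3) = m13 at *
  generalize cM h ξ (σ 2) (σ 1) = m21 at *
  generalize cM h ξ (σ 2) (σ 2) = m22 at *
  generalize cM h ξ (σ 2) (σ 3) = m23 at *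
  generalize cM h ξ (σ 3) (σ 1) = m31 at *
  generalize cM h ξ (σ 3) (σ 2) = m32 at *
  generalize cM h ξ (σ 3) (σ 3) = m33 at *
  set D := m11 * (m22 * m33 - m23 * m32) - m12 * (m21 * m33 - m23 * m31)
    + m13 * (m21 * m32 - m22 * m31) with hD
  have d1 : D * v (σ 1) = 0 := by
    rw [hD]
    linear_combination (m22 * m33 - m23 * m32) * e1 - (m12 * m33 - m13 * m32) * e2
      + (m12 * m23 - m13 * m22) * e3
  have d2 : D * v (σ 2) = 0 := by
    rw [hD]
    linear_combination (-(m21 * m33 - m23 * m31)) * e1 + (m11 * m33 - m13 * m31) * e2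
      - (m11 * m23 - m13 * m21) * e3
  have d3 : D * v (σ 3) = 0 := by
    rw [hD]
    linear_combination (m21 * m32 - m22 * m31) * e1 - (m11 * m32 - m12 * m31) * e2
      + (m11 * m22 - m12 * m21) * e3
  have : D = 0 := by
    obtain ⟨j, hj⟩ := hvne
    fin_cases j
    · exact absurd hv0 hj
    · exact (mul_eq_zero.mp d1).resolve_right hj
    · exact (mul_eq_zero.mp d2).resolve_right hj
    · exact (mul_eq_zero.mp d3).resolve_right hj
  rw [this, mul_zero]

/-- Petrov components of the wedge product of two covectors -/
def wedge (x y : Fin 4 → ℝ) (A : Fin 6) : ℝ :=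
  x (pFst A) * y (pSnd A) - x (pSnd A) * y (pFst A)

theorem cM_self (H : Matrix (Fin 6) (Fin 6) ℝ) (hH : ∀ i j, H i j = H j i) (ξ : Fin 4 → ℝ)
    (p : Fin 4) : ∑ s, cM (fromPetrov H) ξ p s * ξ s = 0 := by
  have h : ∀ s b c, fromPetrov H b p s c = - fromPetrov H b p c s := fun s b c => by
    rw [fromPetrov_symm H hH, fromPetrov_swap, fromPetrov_symm H hH]
  have e : ∑ s, cM (fromPetrov H) ξ p s * ξ s = - ∑ s, cM (fromPetrov H) ξ p s * ξ s := by
    conv_lhs => simp only [cM, Finset.sum_mul]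
    simp only [cM, Finset.sum_mul, ← Finset.sum_neg_distrib]
    rw [Finset.sum_comm]
    conv_rhs => rw [Finset.sum_comm]
    refine Finset.sum_congr rfl fun b _ => ?_
    rw [Finset.sum_comm]
    refine Finset.sum_congr rfl fun c _ => Finset.sum_congr rfl fun d _ => ?_
    rw [h]; ring
  linarith

theorem cM_other (H : Matrix (Fin 6) (Fin 6) ℝ) (ξ η : Fin 4 → ℝ) (μ : ℝ)
    (hw : ∀ A, ∑ B, H A B * wedge ξ η B = μ * wedge ξ η (Fin.rev A))
    (p : Fin 4) : ∑ s, cM (fromPetrov H) ξ p s * η s = 0 := by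
  have w0 := hw 0
  have w1 := hw 1
  have w2 := hw 2
  have w3 := hw 3
  have w4 := hw 4
  have w5 := hw 5
  have r0 : Fin.rev (0 : Fin 6) = 5 := rfl
  have r1 : Fin.rev (1 : Fin 6) = 4 := rfl
  have r2 : Fin.rev (2 : Fin 6) = 3 := rfl
  have r3 : Fin.rev (3 : Fin 6) = 2 := rfl
  have r4 : Fin.rev (4 : Fin 6) = 1 := rfl
  have r5 : Fin.rev (5 : Fin 6) = 0 := rfl
  simp only [r0, r1, r2, r3, r4, r5, Fin.sum_univ_six, wedge, pFst, pSnd, Matrix.cons_val]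
    at w0 w1 w2 w3 w4 w5
  fin_cases p <;>
    simp only [cM, fromPetrov, Fin.sum_univ_four, bSgn, bIdx, Matrix.cons_val, Fin.zero_eta,
      Fin.mk_one, Fin.reduceFinMk, mul_zero, zero_mul, add_zero, zero_add]
  · linear_combination ξ 1 * w0 + ξ 2 * w1 + ξ 3 * w2
  · linear_combination -ξ 0 * w0 + ξ 2 * w3 - ξ 3 * w4
  · linear_combination -ξ 0 * w1 - ξ 1 * w3 + ξ 3 * w5
  · linear_combination -ξ 0 * w2 + ξ 1 * w4 - ξ 2 * w5

theorem petrov_vol (G : Fin 4 → Fin 4 → Fin 4 → Fin 4 → ℝ) (A B : Fin 6) :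
    petrov (vol G) A B = |(petrov G).det| ^ ((1 : ℝ) / 6) * (if B = Fin.rev A then 1 else 0) := by
  simp only [petrov, vol, Matrix.of_apply]
  congr 1
  rw [eps_expand]
  fin_cases A <;> fin_cases B <;> simp [pFst, pSnd, dl, Fin.rev]

theorem Kmat_mulVec (G : Fin 4 → Fin 4 → Fin 4 → Fin 4 → ℝ) (x : Fin 6 → ℝ) (A : Fin 6) :
    (Kmat G).mulVec x A = |(petrov G).det| ^ ((1 : ℝ) / 6) *
      ∑ B, (petrov G)⁻¹ (Fin.rev A) B * x B := by
  rw [Kmat, ← Matrix.mulVec_mulVec]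
  generalize hy : (petrov G)⁻¹.mulVec x = y
  have : ∑ B, (petrov G)⁻¹ (Fin.rev A) B * x B = y (Fin.rev A) := by rw [← hy]; rfl
  rw [this]
  simp only [Matrix.mulVec, dotProduct, petrov_vol]
  simp

theorem exists_wedge (w : Fin 6 → ℝ) (hw : w ≠ 0)
    (h : w 0 * w 5 + w 1 * w 4 + w 2 * w 3 = 0) :
    ∃ (x y : Fin 4 → ℝ) (t : ℝ), t ≠ 0 ∧ ∀ A, wedge x y A = t * w A := by
  obtain ⟨i, hi⟩ := Function.ne_iff.mp hw
  have hi : w i ≠ 0 := hi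
  fin_cases i
  · refine ⟨![0, w 0, w 1, w 2], ![-w 0, 0, w 3, -w 4], w 0, hi, fun A => ?_⟩
    fin_cases A <;> simp [wedge, pFst, pSnd] <;> linarith
  · refine ⟨![0, w 0, w 1, w 2], ![-w 1, -w 3, 0, w 5], w 1, hi, fun A => ?_⟩
    fin_cases A <;> simp [wedge, pFst, pSnd] <;> linarith
  · refine ⟨![0, w 0, w 1, w 2], ![-w 2, w 4, -w 5, 0], w 2, hi, fun A => ?_⟩
    fin_cases A <;> simp [wedge, pFst, pSnd] <;> linarith
  · refine ⟨![-w 0, 0, w 3, -w 4], ![-w 1, -w 3, 0, w 5], w 3, hi, fun A => ?_⟩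
    fin_cases A <;> simp [wedge, pFst, pSnd] <;> linarith
  · refine ⟨![-w 2, w 4, -w 5, 0], ![-w 0, 0, w 3, -w 4], w 4, hi, fun A => ?_⟩
    fin_cases A <;> simp [wedge, pFst, pSnd] <;> linarith
  · refine ⟨![-w 1, -w 3, 0, w 5], ![-w 2, w 4, -w 5, 0], w 5, hi, fun A => ?_⟩
    fin_cases A <;> simp [wedge, pFst, pSnd] <;> linarith

/-- Lemma 4.1: existence of a null plane.  If the endomorphism
`K = ω̂_G ∘ Ĝ⁻¹` of `Λ²((ℝ⁴)*)` admits a real Jordan chain of length two, then there are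
linearly independent covectors `θ¹, θ²` such that every `ξ` in their span satisfies
`𝒢(ξ,ξ,ξ,ξ) = 0`. -/
theorem exists_null_plane_of_jordan_chain
    (G : Fin 4 → Fin 4 → Fin 4 → Fin 4 → ℝ)
    (hsym : ∀ a b c d, G a b c d = G c d a b)
    (hasym : ∀ a b c d, G a b c d = - G b a c d)
    (hinv : IsUnit (petrov G).det)
    (lam : ℝ) (Ω₁ Ω₂ : Fin 6 → ℝ) (hΩ₁ : Ω₁ ≠ 0)
    (h1 : (Kmat G).mulVec Ω₁ = lam • Ω₁)
    (h2 : (Kmat G).mulVec Ω₂ = Ω₁ + lam • Ω₂) :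
    ∃ θ₁ θ₂ : Fin 4 → ℝ, LinearIndependent ℝ ![θ₁, θ₂] ∧
      ∀ ξ ∈ Submodule.span ℝ ({θ₁, θ₂} : Set (Fin 4 → ℝ)), fresnelPoly G ξ = 0 := by
  have hHs : ∀ i j, (petrov G)⁻¹ i j = (petrov G)⁻¹ j i := by
    have hp : (petrov G).transpose = petrov G := by
      ext i j
      simp only [Matrix.transpose_apply, petrov, Matrix.of_apply]
      exact hsym _ _ _ _
    have hq : ((petrov G)⁻¹).transpose = (petrov G)⁻¹ := by rw [Matrix.transpose_nonsing_inv, hp]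
    intro i j
    conv_lhs => rw [← hq]
    rfl
  have hc : |(petrov G).det| ^ ((1 : ℝ) / 6) ≠ 0 :=
    (Real.rpow_pos_of_pos (abs_pos.mpr hinv.ne_zero) _).ne'
  have k1 : ∀ A, |(petrov G).det| ^ ((1 : ℝ) / 6) * ∑ B, (petrov G)⁻¹ A B * Ω₁ B
      = lam * Ω₁ (Fin.rev A) := by
    intro A
    have := congrFun h1 (Fin.rev A)
    rwa [Kmat_mulVec, Fin.rev_rev] at this
  have k2 : ∀ A, |(petrov G).det| ^ ((1 : ℝ) / 6) * ∑ B, (petrov G)⁻¹ A B * Ω₂ B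
      = Ω₁ (Fin.rev A) + lam * Ω₂ (Fin.rev A) := by
    intro A
    have := congrFun h2 (Fin.rev A)
    rwa [Kmat_mulVec, Fin.rev_rev] at this
  have hF : ∀ ξ, fS (ginv G) ξ = 0 → fresnelPoly G ξ = 0 := by
    intro ξ h
    rw [fresnel_eq]
    unfold fS at h
    rw [h, mul_zero]
  have hgs : ∀ a b c d, ginv G a b c d = ginv G c d a b := fromPetrov_symm _ hHs
  have hga : ∀ a b c d, ginv G a b c d = - ginv G b a c d := fromPetrov_swap _
  have hg : ginv G = fromPetrov (petrov G)⁻¹ := rfl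
  generalize ginv G = g at hF hgs hga hg
  generalize (petrov G)⁻¹ = H at *
  generalize |(petrov G).det| ^ ((1 : ℝ) / 6) = c at *
  -- Ω₁ is null for the wedge pairing
  have hnull : Ω₁ 0 * Ω₁ 5 + Ω₁ 1 * Ω₁ 4 + Ω₁ 2 * Ω₁ 3 = 0 := by
    have e1 : ∑ A, Ω₁ A * ∑ B, H A B * Ω₂ B = ∑ A, Ω₂ A * ∑ B, H A B * Ω₁ B := by
      simp only [Finset.mul_sum]
      rw [Finset.sum_comm]
      refine Finset.sum_congr rfl fun A _ => Finset.sum_congr rfl fun B _ => ?_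
      rw [hHs B A]; ring
    have e2 : ∑ A, Ω₁ A * (c * ∑ B, H A B * Ω₂ B) = ∑ A, Ω₂ A * (c * ∑ B, H A B * Ω₁ B) := by
      simp only [mul_left_comm _ c, ← Finset.mul_sum]
      rw [e1]
    simp only [k1, k2] at e2
    have r0 : Fin.rev (0 : Fin 6) = 5 := rfl
    have r1 : Fin.rev (1 : Fin 6) = 4 := rfl
    have r2 : Fin.rev (2 : Fin 6) = 3 := rfl
    have r3 : Fin.rev (3 : Fin 6) = 2 := rfl
    have r4 : Fin.rev (4 : Fin 6) = 1 := rfl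
    have r5 : Fin.rev (5 : Fin 6) = 0 := rfl
    simp only [Fin.sum_univ_six, r0, r1, r2, r3, r4, r5] at e2
    linear_combination e2 / 2
  obtain ⟨x, y, t, ht, hxy⟩ := exists_wedge Ω₁ hΩ₁ hnull
  obtain ⟨A₀, hA₀⟩ := Function.ne_iff.mp hΩ₁
  have hA₀ : Ω₁ A₀ ≠ 0 := hA₀
  refine ⟨x, y, ?_, ?_⟩
  · rw [LinearIndependent.pair_iff]
    intro s r hsr
    have hne : wedge x y A₀ ≠ 0 := by rw [hxy]; exact mul_ne_zero ht hA₀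
    have f1 := congrFun hsr (pFst A₀)
    have f2 := congrFun hsr (pSnd A₀)
    simp only [Pi.add_apply, Pi.smul_apply, smul_eq_mul, Pi.zero_apply] at f1 f2
    constructor
    · refine (mul_eq_zero.mp (?_ : s * wedge x y A₀ = 0)).resolve_right hne
      unfold wedge
      linear_combination y (pSnd A₀) * f1 - y (pFst A₀) * f2
    · refine (mul_eq_zero.mp (?_ : r * wedge x y A₀ = 0)).resolve_right hne
      unfold wedge
      linear_combination x (pFst A₀) * f2 - x (pSnd A₀) * f1
  · intro ξ hξ
    obtain ⟨s, r, rfl⟩ := Submodule.mem_span_pair.mp hξ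
    apply hF
    by_cases hsr : s ^ 2 + r ^ 2 = 0
    · have hs : s = 0 := by nlinarith [sq_nonneg s, sq_nonneg r]
      have hr : r = 0 := by nlinarith [sq_nonneg s, sq_nonneg r]
      subst hs hr
      simp [fS, cM]
    · have hw : ∀ A, wedge (s • x + r • y) (-r • x + s • y) A = (s ^ 2 + r ^ 2) * t * Ω₁ A := by
        intro A
        rw [mul_assoc, ← hxy]
        simp only [wedge, Pi.add_apply, Pi.smul_apply, smul_eq_mul]
        ring
      refine fS_zero g hgs hga _ (-r • x + s • y) ⟨pFst A₀, pSnd A₀, ?_⟩ ?_ ?_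
      · have := hw A₀
        unfold wedge at this
        rw [this]
        exact mul_ne_zero (mul_ne_zero hsr ht) hA₀
      · rw [hg]
        exact cM_self H hHs _
      · rw [hg]
        refine cM_other H _ _ (lam / c) fun A => ?_
        simp only [hw]
        have : ∑ B, H A B * ((s ^ 2 + r ^ 2) * t * Ω₁ B) =
            (s ^ 2 + r ^ 2) * t * ∑ B, H A B * Ω₁ B := by
          rw [Finset.mul_sum]
          refine Finset.sum_congr rfl fun B _ => ?_
          ring
        rw [this]
        field_simp
        linear_combination k1 A

end
end
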